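/- Let G be a finite connected simple graph on vertex set V with nonnegative edge weights w, let x̄ : V → {0,1} with nonempty facility set F = {k ∈ V : x̄(k) = 1}, and let i ∈ V. With the dual feasible set D of pairs (π, μ) — π : V ∪ {t} → ℝ, μ : V → ℝ, μ(k) ≥ 0 for all k, π(k) ≤ π(l) + w({k,l}) and π(l) ≤ π(k) + w({k,l}) for every edge {k,l} of G, and π(k) ≤ π(t) + μ(k) for every k ∈ V — and objective Φ(π,μ) = π(i) − π(t) − ∑_{k ∈ V} x̄(k)·μ(k), the supremum of Φ over D equals min_{j ∈ F} d_w(i,j), the distance from i to its nearest facility. -/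

import Mathlib

open SimpleGraph

/-- The weighted distance between `i` and `j`: the infimum (`sInf` in `ℝ`) of the
weighted lengths of all walks from `i` to `j`. -/
noncomputable def gdist {V : Type*} (G : SimpleGraph V) (w : Sym2 V → ℝ) (i j : V) : ℝ :=
  sInf {L : ℝ | ∃ p : G.Walk i j, (p.edges.map w).sum = L}

theorem walk_len_nonneg {V : Type*} (G : SimpleGraph V) (w : Sym2 V → ℝ)
    (hw : ∀ e ∈ G.edgeSet, 0 ≤ w e) {a b : V} (p : G.Walk a b) :
    0 ≤ (p.edges.map w).sum := by
  apply List.sum_nonneg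
  intro y hy
  obtain ⟨e, he, rfl⟩ := List.mem_map.1 hy
  exact hw e (p.edges_subset_edgeSet he)

theorem gdist_le_walk {V : Type*} (G : SimpleGraph V) (w : Sym2 V → ℝ)
    (hw : ∀ e ∈ G.edgeSet, 0 ≤ w e) {a b : V} (p : G.Walk a b) :
    gdist G w a b ≤ (p.edges.map w).sum := by
  apply csInf_le
  · refine ⟨0, ?_⟩
    rintro _ ⟨q, rfl⟩
    exact walk_len_nonneg G w hw q
  · exact ⟨p, rfl⟩

theorem le_gdist {V : Type*} (G : SimpleGraph V) (hG : G.Connected) (w : Sym2 V → ℝ)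
    {a b : V} {c : ℝ} (h : ∀ p : G.Walk a b, c ≤ (p.edges.map w).sum) :
    c ≤ gdist G w a b := by
  obtain ⟨p⟩ := hG.preconnected a b
  refine le_csInf ⟨(p.edges.map w).sum, p, rfl⟩ ?_
  rintro _ ⟨q, rfl⟩
  exact h q

theorem potential_walk {V : Type*} (G : SimpleGraph V) (w : Sym2 V → ℝ) (π : V → ℝ)
    (h : ∀ k l, G.Adj k l → π k ≤ π l + w s(k, l)) {a b : V} (p : G.Walk a b) :
    π a ≤ π b + (p.edges.map w).sum := by
  induction p with
  | nil => simp
  | cons hadj q ih =>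
    have := h _ _ hadj
    simp only [Walk.edges_cons, List.map_cons, List.sum_cons]
    linarith

/-- The supremum of the dual objective `Φ(π,μ) = π i - π t - ∑ k, x̄ k * μ k` over the
dual feasible set equals the distance from `i` to its nearest facility. Here `π t`
is modelled as a separate real variable `πt` for the auxiliary sink `t`. -/
theorem stmt10 {V : Type*} [Fintype V] (G : SimpleGraph V) (hG : G.Connected)
    (w : Sym2 V → ℝ) (hw : ∀ e ∈ G.edgeSet, 0 ≤ w e)
    (x : V → ℝ) (hx01 : ∀ k, x k = 0 ∨ x k = 1)
    (F : Finset V) (hFx : ∀ k, k ∈ F ↔ x k = 1) (hF : F.Nonempty) (i : V) :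
    sSup {y : ℝ | ∃ π : V → ℝ, ∃ πt : ℝ, ∃ μ : V → ℝ,
        (∀ k, 0 ≤ μ k) ∧ (∀ k l, G.Adj k l → π k ≤ π l + w s(k, l)) ∧
        (∀ k, π k ≤ πt + μ k) ∧ y = π i - πt - ∑ k : V, x k * μ k} =
      F.inf' hF (fun j => gdist G w i j) := by
  have hnn : ∀ a b, 0 ≤ gdist G w a b := fun a b =>
    le_gdist G hG w (fun p => walk_len_nonneg G w hw p)
  have hinf : ∀ k, 0 ≤ F.inf' hF (fun j => gdist G w k j) := fun k =>
    Finset.le_inf' _ _ (fun j _ => hnn k j)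
  apply IsGreatest.csSup_eq
  constructor
  · refine ⟨fun k => F.inf' hF (fun j => gdist G w k j), 0,
      fun k => F.inf' hF (fun j => gdist G w k j), hinf, ?_, by simp, ?_⟩
    · intro k l hkl
      rw [← sub_le_iff_le_add]
      apply Finset.le_inf'
      intro j hj
      apply le_gdist G hG w
      intro p
      have h1 := gdist_le_walk G w hw (Walk.cons hkl p)
      have h2 : F.inf' hF (fun j => gdist G w k j) ≤ gdist G w k j :=
        Finset.inf'_le (fun j => gdist G w k j) hj
      simp only [Walk.edges_cons, List.map_cons, List.sum_cons] at h1
      linarith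
    · have hs : ∑ k : V, x k * F.inf' hF (fun j => gdist G w k j) = 0 := by
        apply Finset.sum_eq_zero
        intro k _
        rcases hx01 k with h | h
        · simp [h]
        · have h2 : F.inf' hF (fun j => gdist G w k j) ≤ gdist G w k k :=
            Finset.inf'_le (fun j => gdist G w k j) ((hFx k).2 h)
          have h1 := gdist_le_walk G w hw (Walk.nil : G.Walk k k)
          simp only [Walk.edges_nil, List.map_nil, List.sum_nil] at h1
          rw [le_antisymm (h2.trans h1) (hinf k), mul_zero]
      simp only [hs, sub_zero]
  · rintro y ⟨π, πt, μ, hμ, hadj, ht, rfl⟩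
    apply Finset.le_inf'
    intro j hj
    apply le_gdist G hG w
    intro p
    have h1 := potential_walk G w π hadj p
    have h2 := ht j
    have h3 : x j * μ j ≤ ∑ k : V, x k * μ k := by
      apply Finset.single_le_sum (f := fun k => x k * μ k) _ (Finset.mem_univ j)
      intro k _
      rcases hx01 k with h | h
      · simp [h]
      · simpa [h] using hμ k
    rw [(hFx j).1 hj, one_mul] at h3
    linarith
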